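/- arXiv:1306.3340 — 3 statements merged into one kernel-verified Lean document; each statement's English description precedes it below -/
import Mathlib

section
/- Let (G, u) be a strongly semisimple unital ℓ-group, let h₁, …, hₙ ∈ G, and for each i let Zᵢ be the set of maximal ℓ-ideals of G containing hᵢ. Suppose g₁, …, gₙ ∈ G satisfy gᵢ - gⱼ ∈ m for all i, j ∈ {1, …, n} and all m ∈ Zᵢ ∩ Zⱼ. Then there exists g ∈ G such that g - gᵢ ∈ m for each i ∈ {1, …, n} and each m ∈ Zᵢ. (Main Theorem, existence part; by Hölder's theorem, for a maximal ℓ-ideal m the Yosida functions satisfy ĝ(m) = ĝᵢ(m) if and only if g - gᵢ ∈ m, so this is the algebraic form of the functional statement.) -/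
/-- An ℓ-ideal of an ℓ-group `G`: an additive subgroup `I` such that `g ∈ I`
whenever `|g| ≤ |h|` for some `h ∈ I`. -/
def IsLIdeal {G : Type*} [Lattice G] [AddCommGroup G]
    [CovariantClass G G (· + ·) (· ≤ ·)] (I : AddSubgroup G) : Prop :=
  ∀ ⦃g h : G⦄, h ∈ I → |g| ≤ |h| → g ∈ I

/-- The ℓ-ideal generated by a subset `S` of `G`: the smallest ℓ-ideal containing `S`. -/
def lIdealGen {G : Type*} [Lattice G] [AddCommGroup G]
    [CovariantClass G G (· + ·) (· ≤ ·)] (S : Set G) : AddSubgroup G :=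
  sInf {I : AddSubgroup G | IsLIdeal I ∧ S ⊆ ↑I}

/-- A prime ℓ-ideal: a proper ℓ-ideal `p` such that `a ⊓ b = 0` implies `a ∈ p` or `b ∈ p`. -/
def IsPrimeLIdeal {G : Type*} [Lattice G] [AddCommGroup G]
    [CovariantClass G G (· + ·) (· ≤ ·)] (p : AddSubgroup G) : Prop :=
  IsLIdeal p ∧ p ≠ ⊤ ∧ ∀ a b : G, a ⊓ b = 0 → a ∈ p ∨ b ∈ p

/-- A maximal ℓ-ideal: a proper ℓ-ideal maximal under inclusion among proper ℓ-ideals. -/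
def IsMaximalLIdeal {G : Type*} [Lattice G] [AddCommGroup G]
    [CovariantClass G G (· + ·) (· ≤ ·)] (m : AddSubgroup G) : Prop :=
  IsLIdeal m ∧ m ≠ ⊤ ∧ ∀ I : AddSubgroup G, IsLIdeal I → I ≠ ⊤ → m ≤ I → I = m

/-- A (strong order) unit of `G`. -/
def IsStrongUnit {G : Type*} [Lattice G] [AddCommGroup G]
    [CovariantClass G G (· + ·) (· ≤ ·)] (u : G) : Prop :=
  0 ≤ u ∧ ∀ g : G, ∃ n : ℕ, g ≤ n • u

/-- `G` is strongly semisimple: for every `h ∈ G`, the intersection of all maximal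
ℓ-ideals containing `h` equals the principal ℓ-ideal generated by `h`. -/
def IsStronglySemisimple (G : Type*) [Lattice G] [AddCommGroup G]
    [CovariantClass G G (· + ·) (· ≤ ·)] : Prop :=
  ∀ h : G, sInf {m : AddSubgroup G | IsMaximalLIdeal m ∧ h ∈ m} = lIdealGen {h}

section helpers
variable {G : Type*} [Lattice G] [AddCommGroup G] [CovariantClass G G (· + ·) (· ≤ ·)]

theorem aux_abs_le {x c : G} : |x| ≤ c ↔ x ≤ c ∧ -x ≤ c := by
  unfold abs; exact sup_le_iff

theorem aux_absnn (x : G) : 0 ≤ |x| := abs_nonneg x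

theorem aux_nsmul_mono {a : G} (ha : 0 ≤ a) {k l : ℕ} (hkl : k ≤ l) : k • a ≤ l • a :=
  nsmul_le_nsmul_left ha hkl

def auxSub (h : G) : AddSubgroup G where
  carrier := {x | ∃ k : ℕ, |x| ≤ k • |h|}
  zero_mem' := ⟨0, by simp⟩
  add_mem' := by
    rintro a b ⟨k, hk⟩ ⟨l, hl⟩
    rw [aux_abs_le] at hk hl
    refine ⟨k + l, ?_⟩
    rw [aux_abs_le, add_smul]
    refine ⟨add_le_add hk.1 hl.1, ?_⟩
    rw [neg_add]
    exact add_le_add hk.2 hl.2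
  neg_mem' := by
    rintro a ⟨k, hk⟩
    exact ⟨k, by rwa [abs_neg]⟩

theorem aux_gen {x h : G} (hx : x ∈ lIdealGen {h}) : ∃ k : ℕ, |x| ≤ k • |h| := by
  have : x ∈ auxSub h := by
    refine (AddSubgroup.mem_sInf.1 hx) (auxSub h) ⟨?_, ?_⟩
    · rintro a b ⟨k, hk⟩ hab
      exact ⟨k, hab.trans hk⟩
    · rintro y rfl
      exact ⟨1, by simp⟩
  exact this

theorem aux_mem {I : AddSubgroup G} (hI : IsLIdeal I) {x h : G} (hh : h ∈ I) {k : ℕ}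
    (hk : |x| ≤ k • |h|) : x ∈ I := by
  have h1 : |h| ∈ I := hI hh (by rw [abs_abs])
  have h2 : k • |h| ∈ I := I.nsmul_mem h1 k
  exact hI h2 (hk.trans (le_abs_self _))
end helpers

/-- **Main Theorem (existence part).** For a strongly semisimple unital ℓ-group,
given elements `h i` determining the principal zero sets `Z i` (maximal ℓ-ideals
containing `h i`), any family compatible on the intersections can be patched. -/
theorem main_theorem_existence {G : Type*} [Lattice G] [AddCommGroup G]
    [CovariantClass G G (· + ·) (· ≤ ·)] (u : G) (hu : IsStrongUnit u)
    (hss : IsStronglySemisimple G) {n : ℕ} (h g : Fin n → G)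
    (hcomp : ∀ i j, ∀ m : AddSubgroup G, IsMaximalLIdeal m →
      h i ∈ m → h j ∈ m → g i - g j ∈ m) :
    ∃ g' : G, ∀ i, ∀ m : AddSubgroup G, IsMaximalLIdeal m → h i ∈ m → g' - g i ∈ m := by
  have key : ∀ i j, ∃ k : ℕ, |g i - g j| ≤ k • (|h i| + |h j|) := by
    intro i j
    have hnn : 0 ≤ |h i| + |h j| := add_nonneg (aux_absnn _) (aux_absnn _)
    have : g i - g j ∈ lIdealGen {|h i| + |h j|} := by
      rw [← hss]
      refine AddSubgroup.mem_sInf.2 ?_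
      rintro m ⟨hm, hmem⟩
      refine hcomp i j m hm (hm.1 hmem ?_) (hm.1 hmem ?_)
      · rw [abs_of_nonneg hnn]
        exact le_add_of_nonneg_right (aux_absnn _)
      · rw [abs_of_nonneg hnn]
        exact le_add_of_nonneg_left (aux_absnn _)
    obtain ⟨k, hk⟩ := aux_gen this
    rw [abs_of_nonneg hnn] at hk
    exact ⟨k, hk⟩
  choose k hk using key
  rcases n with _ | n
  · exact ⟨0, fun i => i.elim0⟩
  obtain ⟨K, hK⟩ : ∃ K : ℕ, ∀ i j, k i j ≤ K :=
    ⟨∑ i, ∑ j, k i j, fun i j =>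
      (Finset.single_le_sum (f := fun j => k i j) (fun _ _ => Nat.zero_le _)
        (Finset.mem_univ j)).trans
      (Finset.single_le_sum (f := fun i => ∑ j, k i j) (fun _ _ => Nat.zero_le _)
        (Finset.mem_univ i))⟩
  have hK' : ∀ i j, g j - g i ≤ K • |h j| + K • |h i| := by
    intro i j
    rw [← smul_add]
    exact ((aux_abs_le.1 (hk j i)).1).trans
      (aux_nsmul_mono (add_nonneg (aux_absnn _) (aux_absnn _)) (hK j i))
  refine ⟨Finset.univ.sup' Finset.univ_nonempty (fun i => g i - K • |h i|), ?_⟩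
  intro i m hm him
  refine aux_mem hm.1 him (k := K) (aux_abs_le.2 ⟨?_, ?_⟩)
  · rw [sub_le_iff_le_add]
    refine Finset.sup'_le _ _ fun j _ => ?_
    have := hK' i j
    rw [sub_le_iff_le_add] at this ⊢
    refine this.trans (le_of_eq ?_)
    abel
  · rw [neg_sub, sub_le_comm]
    exact Finset.le_sup' (fun i => g i - K • |h i|) (Finset.mem_univ i)
end

section
/- Let G be an ℓ-group, let I₁, …, Iₙ be finitely many ℓ-ideals of G, and let g₁, …, gₙ ∈ G be such that for all i, j ∈ {1, …, n} and every prime ℓ-ideal p of G containing both Iᵢ and Iⱼ one has gᵢ - gⱼ ∈ p. Then there exists g ∈ G such that g - gᵢ ∈ p for each i ∈ {1, …, n} and each prime ℓ-ideal p containing Iᵢ. (Patching Lemma: the spectral dual of Keimel's Chinese Remainder Theorem, with closed subsets of Spec G given as the sets of primes containing the ℓ-ideals Iᵢ.) -/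
section helpers
variable {G : Type*} [Lattice G] [AddCommGroup G] [CovariantClass G G (· + ·) (· ≤ ·)]

theorem li_le {I : AddSubgroup G} (hI : IsLIdeal I) {x c : G} (hc : c ∈ I) (h : |x| ≤ c) :
    x ∈ I := hI hc (h.trans (le_abs_self c))

theorem li_abs {I : AddSubgroup G} (hI : IsLIdeal I) {x : G} (hx : x ∈ I) : |x| ∈ I :=
  hI hx (by rw [abs_abs])

theorem li_sup_of {I J : AddSubgroup G} (hI : IsLIdeal I) (hJ : IsLIdeal J) {x a b : G}
    (ha : a ∈ I) (hb : b ∈ J) (ha0 : 0 ≤ a) (hb0 : 0 ≤ b) (h : |x| ≤ a + b) : x ∈ I ⊔ J := by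
  have h1 : x ≤ a + b := (le_abs_self x).trans h
  have h2 : -x ≤ a + b := (neg_le_abs x).trans h
  rw [AddSubgroup.mem_sup]
  refine ⟨(x ⊓ a) ⊔ (-a), li_le hI ha ?_, x - ((x ⊓ a) ⊔ (-a)), li_le hJ hb ?_, by abel⟩
  · rw [abs_le']
    refine ⟨sup_le inf_le_right ((neg_nonpos.2 ha0).trans ha0), ?_⟩
    rw [neg_le]; exact le_sup_right
  · rw [abs_le']
    constructor
    · rw [sub_le_comm]
      refine le_sup_of_le_left (le_inf (sub_le_self x hb0) ?_)
      rwa [sub_le_iff_le_add]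
    · rw [neg_sub, sub_le_iff_le_add]
      refine sup_le (inf_le_left.trans (le_add_of_nonneg_left hb0)) ?_
      rw [neg_le_iff_add_nonneg]
      rw [neg_le_iff_add_nonneg] at h2
      convert h2 using 1; abel

theorem li_sup_mem {I J : AddSubgroup G} (hI : IsLIdeal I) (hJ : IsLIdeal J) {x : G}
    (h : x ∈ I ⊔ J) : ∃ a ∈ I, ∃ b ∈ J, 0 ≤ a ∧ 0 ≤ b ∧ |x| ≤ a + b := by
  obtain ⟨a, ha, b, hb, rfl⟩ := AddSubgroup.mem_sup.1 h
  exact ⟨_, li_abs hI ha, _, li_abs hJ hb, abs_nonneg a, abs_nonneg b, abs_add_le a b⟩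

theorem li_sup {I J : AddSubgroup G} (hI : IsLIdeal I) (hJ : IsLIdeal J) : IsLIdeal (I ⊔ J) := by
  intro g h hh hg
  obtain ⟨a, ha, b, hb, ha0, hb0, hab⟩ := li_sup_mem hI hJ hh
  exact li_sup_of hI hJ ha hb ha0 hb0 (hg.trans hab)

theorem li_inf {I J : AddSubgroup G} (hI : IsLIdeal I) (hJ : IsLIdeal J) : IsLIdeal (I ⊓ J) :=
  fun _ _ hh hg => ⟨hI hh.1 hg, hJ hh.2 hg⟩

theorem li_dist {P K L : AddSubgroup G} (hP : IsLIdeal P) (hK : IsLIdeal K) (hL : IsLIdeal L)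
    {x : G} (h1 : x ∈ P ⊔ K) (h2 : x ∈ P ⊔ L) : x ∈ P ⊔ (K ⊓ L) := by
  obtain ⟨a, ha, b, hb, ha0, hb0, hab⟩ := li_sup_mem hP hK h1
  obtain ⟨c, hc, d, hd, hc0, hd0, hcd⟩ := li_sup_mem hP hL h2
  have h0 : 0 ≤ b ⊓ d := le_inf hb0 hd0
  have e : |b ⊓ d| = b ⊓ d := abs_of_nonneg h0
  refine li_sup_of hP (li_inf hK hL) (P.add_mem ha hc) (b := b ⊓ d)
    ⟨li_le hK hb (e.le.trans inf_le_left), li_le hL hd (e.le.trans inf_le_right)⟩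
    (add_nonneg ha0 hc0) h0 ?_
  rw [add_inf]
  refine le_inf (hab.trans ?_) (hcd.trans ?_)
  · gcongr; exact le_add_of_nonneg_right hc0
  · gcongr; exact le_add_of_nonneg_left ha0

def liPrin (a : G) : AddSubgroup G where
  carrier := {x | ∃ n : ℕ, |x| ≤ n • |a|}
  zero_mem' := ⟨0, by simp⟩
  neg_mem' := by rintro x ⟨n, h⟩; exact ⟨n, by rwa [abs_neg]⟩
  add_mem' := by
    rintro x y ⟨n, h⟩ ⟨m, h'⟩
    exact ⟨n + m, (abs_add_le x y).trans (by rw [add_nsmul]; exact add_le_add h h')⟩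

theorem liPrin_li (a : G) : IsLIdeal (liPrin a) := by
  rintro g h ⟨n, hn⟩ hg
  exact ⟨n, hg.trans hn⟩

theorem liPrin_self (a : G) : a ∈ liPrin a := ⟨1, by simp⟩

theorem disj_add {a a' b : G} (h : a ⊓ b = 0) (h' : a' ⊓ b = 0) : (a + a') ⊓ b = 0 := by
  have ha : 0 ≤ a := h ▸ inf_le_left
  have ha' : 0 ≤ a' := h' ▸ inf_le_left
  have hb : 0 ≤ b := h ▸ inf_le_right
  apply le_antisymm _ (le_inf (add_nonneg ha ha') hb)
  have : (a + a') ⊓ b ≤ a := by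
    calc (a + a') ⊓ b ≤ (a + a') ⊓ (a + b) := inf_le_inf_left _ (le_add_of_nonneg_left ha)
      _ = a := by rw [← add_inf, h', add_zero]
  exact (le_inf this inf_le_right).trans h.le

theorem disj_nsmul {a b : G} (h : a ⊓ b = 0) (n : ℕ) : (n • a) ⊓ b = 0 := by
  have hb : 0 ≤ b := h ▸ inf_le_right
  induction n with
  | zero => simpa using hb
  | succ n ih => rw [succ_nsmul]; exact disj_add ih h

theorem liPrin_disj {a b : G} (h : a ⊓ b = 0) : liPrin a ⊓ liPrin b = ⊥ := by
  rw [eq_bot_iff]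
  rintro x ⟨⟨n, hn⟩, ⟨m, hm⟩⟩
  have ha : 0 ≤ a := h ▸ inf_le_left
  have hb : 0 ≤ b := h ▸ inf_le_right
  rw [abs_of_nonneg ha] at hn
  rw [abs_of_nonneg hb] at hm
  have h1 := disj_nsmul h n
  rw [inf_comm] at h1
  have h2 := disj_nsmul h1 m
  have h3 : |x| ≤ 0 := (le_inf hm hn).trans h2.le
  have h4 : x ≤ 0 := (le_abs_self x).trans h3
  have h5 : -x ≤ 0 := (neg_le_abs x).trans h3
  exact AddSubgroup.mem_bot.2 (le_antisymm h4 (neg_nonpos.1 h5))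

theorem li_exists_prime {J : AddSubgroup G} (hJ : IsLIdeal J) {x : G} (hx : x ∉ J) :
    ∃ p : AddSubgroup G, IsPrimeLIdeal p ∧ J ≤ p ∧ x ∉ p := by
  obtain ⟨p, hJp, hp⟩ := zorn_le_nonempty₀ {K : AddSubgroup G | IsLIdeal K ∧ x ∉ K} (by
    intro c hc hch y hy
    have hd := hch.directedOn
    refine ⟨sSup c, ⟨?_, ?_⟩, fun z hz => le_sSup hz⟩
    · intro g h hh hg
      obtain ⟨K, hK, hk⟩ := (AddSubgroup.mem_sSup_of_directedOn ⟨y, hy⟩ hd).1 hh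
      exact (AddSubgroup.mem_sSup_of_directedOn ⟨y, hy⟩ hd).2 ⟨K, hK, (hc hK).1 hk hg⟩
    · intro h
      obtain ⟨K, hK, hk⟩ := (AddSubgroup.mem_sSup_of_directedOn ⟨y, hy⟩ hd).1 h
      exact (hc hK).2 hk) J ⟨hJ, hx⟩
  obtain ⟨hpl, hxp⟩ := hp.prop
  have key : ∀ a, a ∉ p → x ∈ p ⊔ liPrin a := by
    intro a ha
    by_contra hxa
    have := hp.le_of_ge (y := p ⊔ liPrin a) ⟨li_sup hpl (liPrin_li a), hxa⟩ le_sup_left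
    exact ha (this (AddSubgroup.mem_sup_right (liPrin_self a)))
  refine ⟨p, ⟨hpl, ?_, ?_⟩, hJp, hxp⟩
  · rintro rfl; exact hxp trivial
  · intro a b hab
    by_contra! hn
    have := li_dist hpl (liPrin_li a) (liPrin_li b) (key a hn.1) (key b hn.2)
    rw [liPrin_disj hab, sup_bot_eq] at this
    exact hxp this

theorem li_crt : ∀ {n : ℕ} (I : Fin n → AddSubgroup G) (_ : ∀ i, IsLIdeal (I i)) (g : Fin n → G)
    (_ : ∀ i j, g i - g j ∈ I i ⊔ I j), ∃ g' : G, ∀ i, g' - g i ∈ I i := by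
  have dist : ∀ {n : ℕ} (I : Fin n → AddSubgroup G) (_ : ∀ i, IsLIdeal (I i))
      (P : AddSubgroup G) (_ : IsLIdeal P) (x : G) (_ : ∀ i, x ∈ P ⊔ I i),
      IsLIdeal (⨅ i, I i) ∧ x ∈ P ⊔ ⨅ i, I i := by
    intro n
    induction n with
    | zero =>
      intro I hI P hP x hx
      simp only [iInf_of_empty, sup_top_eq]
      exact ⟨fun _ _ _ _ => trivial, trivial⟩
    | succ n ih =>
      intro I hI P hP x hx
      obtain ⟨h1, h2⟩ := ih (fun i => I i.succ) (fun i => hI _) P hP x (fun i => hx _)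
      have e : (⨅ i, I i) = I 0 ⊓ ⨅ i : Fin n, I i.succ := by
        apply le_antisymm
        · exact le_inf (iInf_le _ _) (le_iInf fun i => iInf_le _ _)
        · refine le_iInf fun i => ?_
          refine Fin.cases inf_le_left (fun i => ?_) i
          exact inf_le_right.trans (iInf_le (fun i : Fin n => I i.succ) i)
      rw [e]
      exact ⟨li_inf (hI 0) h1, li_dist hP (hI 0) h1 (hx 0) h2⟩
  intro n
  induction n with
  | zero => intro I _ g _; exact ⟨0, fun i => i.elim0⟩
  | succ n ih =>
    intro I hI g hg
    obtain ⟨g', hg'⟩ := ih (fun i => I i.succ) (fun i => hI _) (fun i => g i.succ)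
      (fun i j => hg _ _)
    have hx := (dist (fun i : Fin n => I i.succ) (fun i => hI _) (I 0) (hI 0) (g' - g 0)
      (fun i => by
        have := AddSubgroup.add_mem _ (AddSubgroup.mem_sup_right (hg' i) : _ ∈ I 0 ⊔ I i.succ)
          (sup_comm (I 0) (I i.succ) ▸ hg i.succ 0)
        simpa using this)).2
    obtain ⟨b, hb, a, ha, hab⟩ := AddSubgroup.mem_sup.1 hx
    refine ⟨g' - a, fun i => ?_⟩
    refine Fin.cases ?_ (fun i => ?_) i
    · have : g' - a - g 0 = b := by
        rw [sub_right_comm, ← hab]; abel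
      rw [this]; exact hb
    · rw [sub_right_comm]
      exact AddSubgroup.sub_mem _ (hg' i) (AddSubgroup.mem_iInf.1 ha i)

end helpers

/-- **Patching Lemma**: the spectral dual of Keimel's Chinese Remainder Theorem,
with closed subsets of `Spec G` given as sets of primes containing the ℓ-ideals `I i`. -/
theorem patching_lemma {G : Type*} [Lattice G] [AddCommGroup G]
    [CovariantClass G G (· + ·) (· ≤ ·)] {n : ℕ}
    (I : Fin n → AddSubgroup G) (hI : ∀ i, IsLIdeal (I i)) (g : Fin n → G)
    (hcomp : ∀ i j, ∀ p : AddSubgroup G, IsPrimeLIdeal p →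
      I i ≤ p → I j ≤ p → g i - g j ∈ p) :
    ∃ g' : G, ∀ i, ∀ p : AddSubgroup G, IsPrimeLIdeal p → I i ≤ p → g' - g i ∈ p := by
  obtain ⟨g', h⟩ := li_crt I hI g (fun i j => by
    by_contra hn
    obtain ⟨p, hp, hle, hx⟩ := li_exists_prime (li_sup (hI i) (hI j)) hn
    exact hx (hcomp i j p hp (le_sup_left.trans hle) (le_sup_right.trans hle)))
  exact ⟨g', fun i p _ hle => hle (h i)⟩
end

section
/- Let (G, u) be a unital ℓ-group and let m be a maximal ℓ-ideal of G. Then there exists a unique additive map f : G → ℝ that preserves binary suprema (f(a ⊔ b) = max(f a, f b) for all a, b ∈ G), satisfies f(u) = 1, and has kernel f⁻¹(0) = m. (Hölder's theorem applied to the simple quotient G/m: the unique unital ℓ-embedding of G/m into (ℝ, 1), composed with the quotient map.) -/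
section HolderAux

variable {G : Type*} [Lattice G] [AddCommGroup G] [CovariantClass G G (· + ·) (· ≤ ·)]

theorem aux_inf_add_le (a b c : G) (ha : 0 ≤ a) (hb : 0 ≤ b) (hc : 0 ≤ c) :
    b ⊓ (a + c) ≤ b ⊓ a + b ⊓ c := by
  rw [inf_add, add_inf, add_inf]
  refine le_inf (le_inf ?_ ?_) (le_inf ?_ ?_)
  · exact inf_le_left.trans (le_add_of_nonneg_left hb)
  · exact inf_le_left.trans (le_add_of_nonneg_right hc)
  · exact inf_le_left.trans (le_add_of_nonneg_left ha)
  · exact inf_le_right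

theorem aux_inf_nsmul (a b : G) (ha : 0 ≤ a) (hb : 0 ≤ b) (hab : b ⊓ a = 0) (n : ℕ) :
    b ⊓ (n • a) ≤ 0 := by
  induction n with
  | zero => simp
  | succ k ih =>
    rw [succ_nsmul]
    refine (aux_inf_add_le _ b _ (nsmul_nonneg ha k) hb ha).trans ?_
    rw [hab, add_zero]; exact ih

theorem aux_abs_mem {m : AddSubgroup G} (hm : IsLIdeal m) {h : G} (hh : h ∈ m) : |h| ∈ m :=
  hm hh (by rw [abs_abs])

theorem aux_mem_of_le {m : AddSubgroup G} (hm : IsLIdeal m) {g h : G} (hh : h ∈ m)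
    (hg : |g| ≤ h) : g ∈ m :=
  hm hh (hg.trans (le_abs_self h))

theorem aux_max {m : AddSubgroup G} (hm : IsMaximalLIdeal m) {a : G} (ha : a ∉ m) (g : G) :
    ∃ n : ℕ, ∃ h ∈ m, 0 ≤ h ∧ |g| ≤ n • |a| + h := by
  obtain ⟨h1, h2, h3⟩ := hm
  let I : AddSubgroup G :=
    { carrier := {g | ∃ n : ℕ, ∃ h ∈ m, 0 ≤ h ∧ |g| ≤ n • |a| + h}
      zero_mem' := ⟨0, 0, m.zero_mem, le_rfl, by simp⟩
      add_mem' := by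
        rintro x y ⟨n, h, hh, h0, hx⟩ ⟨k, l, hl, l0, hy⟩
        refine ⟨n + k, h + l, m.add_mem hh hl, add_nonneg h0 l0, ?_⟩
        refine (abs_add_le x y).trans ((add_le_add hx hy).trans (le_of_eq ?_))
        rw [add_nsmul]; abel
      neg_mem' := by
        rintro x ⟨n, h, hh, h0, hx⟩
        exact ⟨n, h, hh, h0, by rwa [abs_neg]⟩ }
  have hI : IsLIdeal I := by
    rintro x y ⟨n, h, hh, h0, hy⟩ hxy
    exact ⟨n, h, hh, h0, hxy.trans hy⟩
  have hle : m ≤ I := fun x hx => ⟨0, |x|, aux_abs_mem h1 hx, abs_nonneg x, by simp⟩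
  have haI : a ∈ I := ⟨1, 0, m.zero_mem, le_rfl, by simp⟩
  have : I = ⊤ := by
    by_contra hne
    exact ha (h3 I hI hne hle ▸ haI)
  have hg : g ∈ I := this ▸ AddSubgroup.mem_top g
  exact hg

theorem aux_dich {m : AddSubgroup G} (hm : IsMaximalLIdeal m) (x : G) : x⁺ ∈ m ∨ x⁻ ∈ m := by
  by_cases ha : x⁺ ∈ m
  · exact Or.inl ha
  right
  obtain ⟨n, h, hh, h0, hle⟩ := aux_max hm ha x⁻
  have hp := posPart_nonneg x
  have hn := negPart_nonneg x
  rw [abs_of_nonneg hp, abs_of_nonneg hn] at hle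
  refine aux_mem_of_le hm.1 hh ?_
  rw [abs_of_nonneg hn]
  have e : x⁻ ⊓ x⁺ = 0 := by rw [inf_comm]; exact posPart_inf_negPart_eq_zero x
  calc x⁻ = x⁻ ⊓ (n • x⁺ + h) := (inf_eq_left.2 hle).symm
    _ ≤ x⁻ ⊓ (n • x⁺) + x⁻ ⊓ h := aux_inf_add_le _ _ _ (nsmul_nonneg hp n) hn h0
    _ ≤ 0 + h := add_le_add (aux_inf_nsmul _ _ hp hn e n) inf_le_right
    _ = h := zero_add h

/-- positive cone of the quotient -/
def AuxP (m : AddSubgroup G) (q : G ⧸ m) : Prop := ∃ x : G, 0 ≤ x ∧ (x : G ⧸ m) = q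

theorem auxP_add {m : AddSubgroup G} {p q : G ⧸ m} (hp : AuxP m p) (hq : AuxP m q) :
    AuxP m (p + q) := by
  obtain ⟨x, hx, rfl⟩ := hp
  obtain ⟨y, hy, rfl⟩ := hq
  exact ⟨x + y, add_nonneg hx hy, rfl⟩

theorem auxP_antisymm {m : AddSubgroup G} (hm : IsLIdeal m) {q : G ⧸ m} (hp : AuxP m q)
    (hq : AuxP m (-q)) : q = 0 := by
  obtain ⟨x, hx, rfl⟩ := hp
  obtain ⟨y, hy, hxy⟩ := hq
  have h : x + y ∈ m := by
    rw [← QuotientAddGroup.eq_zero_iff, QuotientAddGroup.mk_add, hxy, add_neg_cancel]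
  rw [QuotientAddGroup.eq_zero_iff]
  exact aux_mem_of_le hm h (by rw [abs_of_nonneg hx]; exact le_add_of_nonneg_right hy)

theorem auxP_total {m : AddSubgroup G} (hm : IsMaximalLIdeal m) (q : G ⧸ m) :
    AuxP m q ∨ AuxP m (-q) := by
  obtain ⟨x, rfl⟩ := QuotientAddGroup.mk_surjective q
  rcases aux_dich hm x with h | h
  · right
    refine ⟨x⁻, negPart_nonneg x, ?_⟩
    rw [← QuotientAddGroup.eq_zero_iff] at h
    conv_rhs => rw [← posPart_sub_negPart x]
    rw [QuotientAddGroup.mk_sub, h]; simp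
  · left
    refine ⟨x⁺, posPart_nonneg x, ?_⟩
    rw [← QuotientAddGroup.eq_zero_iff] at h
    conv_rhs => rw [← posPart_sub_negPart x]
    rw [QuotientAddGroup.mk_sub, h]; simp

/-- linear order on the quotient -/
@[reducible] noncomputable def auxOrder {m : AddSubgroup G} (hm : IsMaximalLIdeal m) :
    LinearOrder (G ⧸ m) where
  le p q := AuxP m (q - p)
  le_refl p := ⟨0, le_rfl, by simp⟩
  le_trans p q r h1 h2 := by
    have := auxP_add h1 h2
    rwa [show q - p + (r - q) = r - p by abel] at this
  le_antisymm p q h1 h2 := by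
    have := auxP_antisymm hm.1 h1 (by rwa [neg_sub])
    exact (sub_eq_zero.1 this).symm
  le_total p q := by
    have := auxP_total hm (q - p)
    rwa [neg_sub] at this
  toDecidableLE := Classical.decRel _

theorem aux_exists (u : G) (hu : IsStrongUnit u)
    (m : AddSubgroup G) (hm : IsMaximalLIdeal m) :
    ∃ f : G → ℝ, (∀ a b : G, f (a + b) = f a + f b) ∧
      (∀ a b : G, f (a ⊔ b) = max (f a) (f b)) ∧ f u = 1 ∧
      (∀ x : G, f x = 0 ↔ x ∈ m) := by
  letI : LinearOrder (G ⧸ m) := auxOrder hm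
  have le_def : ∀ p q : G ⧸ m, p ≤ q ↔ AuxP m (q - p) := fun _ _ => Iff.rfl
  haveI : IsOrderedAddMonoid (G ⧸ m) :=
    { add_le_add_left := fun a b h c => by
        rw [le_def] at h ⊢
        simpa using h }
  have mono : ∀ {x y : G}, x ≤ y → (x : G ⧸ m) ≤ y := fun {x y} h =>
    ⟨y - x, sub_nonneg.2 h, rfl⟩
  have hum : u ∉ m := by
    intro h
    refine hm.2.1 (eq_top_iff.2 fun g _ => ?_)
    obtain ⟨n, hn⟩ := hu.2 |g|
    exact aux_mem_of_le hm.1 (m.nsmul_mem h n) hn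
  letI : One (G ⧸ m) := ⟨(u : G ⧸ m)⟩
  have one_def : (1 : G ⧸ m) = (u : G ⧸ m) := rfl
  haveI : ZeroLEOneClass (G ⧸ m) := ⟨mono hu.1⟩
  haveI : NeZero (1 : G ⧸ m) := ⟨by rwa [one_def, Ne, QuotientAddGroup.eq_zero_iff]⟩
  haveI : Archimedean (G ⧸ m) := by
    refine ⟨fun p q hq => ?_⟩
    obtain ⟨x, rfl⟩ := QuotientAddGroup.mk_surjective p
    obtain ⟨y, hy, hyq⟩ : AuxP m q := by simpa using (le_def 0 q).1 hq.le
    subst hyq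
    have hym : y ∉ m := by
      intro h
      exact hq.ne' ((QuotientAddGroup.eq_zero_iff y).2 h)
    obtain ⟨n, h, hh, h0, hle⟩ := aux_max hm hym x
    refine ⟨n, ?_⟩
    rw [abs_of_nonneg hy] at hle
    have := mono ((le_abs_self x).trans hle)
    rwa [QuotientAddGroup.mk_add, (QuotientAddGroup.eq_zero_iff h).2 hh, add_zero] at this
  let F := Archimedean.embedReal (G ⧸ m)
  have fadd : ∀ a b : G, F ((a + b : G) : G ⧸ m) = F (a : G ⧸ m) + F (b : G ⧸ m) := fun a b => by
    rw [QuotientAddGroup.mk_add, map_add]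
  have fz : ∀ x : G, F (x : G ⧸ m) = 0 ↔ x ∈ m := fun x => by
    rw [← QuotientAddGroup.eq_zero_iff, map_eq_zero_iff F (Archimedean.embedReal_injective _)]
  have fmono : ∀ {x y : G}, x ≤ y → F (x : G ⧸ m) ≤ F (y : G ⧸ m) := fun h =>
    F.monotone' (mono h)
  refine ⟨fun x => F (x : G ⧸ m), fadd, ?_, Archimedean.embedReal_one, fz⟩
  intro a b
  refine le_antisymm ?_ (max_le (fmono le_sup_left) (fmono le_sup_right))
  have e1 : a ⊔ b = b + (a - b)⁺ := sup_eq_add_posPart_sub a b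
  have e2 : a ⊔ b = a + (a - b)⁻ := by
    rw [e1, ← sub_eq_zero]
    have := posPart_sub_negPart (a - b)
    rw [add_sub_add_comm, this]; abel
  rcases aux_dich hm (a - b) with h | h
  · apply le_max_of_le_right
    simp only [e1]
    rw [fadd, (fz _).2 h, add_zero]
  · apply le_max_of_le_left
    simp only [e2]
    rw [fadd, (fz _).2 h, add_zero]

theorem aux_le (u : G) (m : AddSubgroup G) (f g : G → ℝ)
    (hf : (∀ a b : G, f (a + b) = f a + f b) ∧
      (∀ a b : G, f (a ⊔ b) = max (f a) (f b)) ∧ f u = 1 ∧ (∀ x : G, f x = 0 ↔ x ∈ m))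
    (hg : (∀ a b : G, g (a + b) = g a + g b) ∧
      (∀ a b : G, g (a ⊔ b) = max (g a) (g b)) ∧ g u = 1 ∧ (∀ x : G, g x = 0 ↔ x ∈ m))
    (x : G) : g x ≤ f x := by
  by_contra! hlt
  obtain ⟨r, hr1, hr2⟩ := exists_rat_btwn hlt
  have hden : (0 : ℝ) < r.den := by exact_mod_cast r.den_pos
  have key : ∀ k : G → ℝ, (∀ a b : G, k (a + b) = k a + k b) → k u = 1 →
      k ((r.den : ℤ) • x - r.num • u) = r.den * (k x - r) := by
    intro k hk hku
    let K : G →+ ℝ := AddMonoidHom.mk' k hk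
    have : K ((r.den : ℤ) • x - r.num • u) = r.den * (K x - r) := by
      rw [map_sub, map_zsmul, map_zsmul, show K u = 1 from hku]
      have : (r : ℝ) * r.den = r.num := by exact_mod_cast Rat.mul_den_eq_num r
      simp only [zsmul_eq_mul, Int.cast_natCast, mul_one]
      linear_combination this
    exact this
  have k1 := key f hf.1 hf.2.2.1
  have k2 := key g hg.1 hg.2.2.1
  set y := (r.den : ℤ) • x - r.num • u
  have f1 : f y ≤ 0 := by rw [k1]; exact mul_nonpos_of_nonneg_of_nonpos hden.le (by linarith)
  have g1 : 0 < g y := by rw [k2]; exact mul_pos hden (by linarith)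
  have f0 : f 0 = 0 := (hf.2.2.2 0).2 m.zero_mem
  have h : y ⊔ 0 ∈ m := (hf.2.2.2 _).1 (by rw [hf.2.1, f0, max_eq_right f1])
  have := (hg.2.2.2 _).2 h
  rw [hg.2.1] at this
  have := le_max_left (g y) (g 0)
  linarith

end HolderAux

/-- **Hölder's theorem for the simple quotient `G/m`**: for each maximal ℓ-ideal `m`
of a unital ℓ-group `(G, u)` there is a unique additive, sup-preserving map
`G → ℝ` sending `u` to `1` and with kernel exactly `m`. -/
theorem holder_quotient {G : Type*} [Lattice G] [AddCommGroup G]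
    [CovariantClass G G (· + ·) (· ≤ ·)] (u : G) (hu : IsStrongUnit u)
    (m : AddSubgroup G) (hm : IsMaximalLIdeal m) :
    ∃! f : G → ℝ, (∀ a b : G, f (a + b) = f a + f b) ∧
      (∀ a b : G, f (a ⊔ b) = max (f a) (f b)) ∧ f u = 1 ∧
      (∀ x : G, f x = 0 ↔ x ∈ m) := by
  obtain ⟨f, hf⟩ := aux_exists u hu m hm
  refine ⟨f, hf, fun g hg => funext fun x => ?_⟩
  exact le_antisymm (aux_le u m f g hf hg x) (aux_le u m g f hg hf x)
end
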